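/- arXiv:2604.20234 — 4 statements merged into one kernel-verified Lean document; each statement's English description precedes it below -/
import Mathlib

section
/- Let t0 ∈ ℝ, let a, b > 0 and 0 < l1 < 1 < l2, and let v : [t0, ∞) → ℝ be a differentiable nonnegative function satisfying v'(t) ≤ −a·v(t)^{l1} − b·v(t)^{l2} for all t ≥ t0. Then v(t) = 0 for all t ≥ t0 + 1/(a(1−l1)) + 1/(b(l2−1)); in particular the settling-time bound 1/(a(1−l1)) + 1/(b(l2−1)) is independent of the initial value v(t0). -/
/-!
While `v` is positive, `v' ≤ -c * v ^ p` with `p ≠ 1` says that `v ^ (1 - p) / (1 - p)` decreases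
at rate at least `c`. For `p = l2 > 1` this quantity is negative, so its drop bounds `v` from above
independently of `v t0`: after time `1 / (b * (l2 - 1))` we have `v ≤ 1`. For `p = l1 < 1` it is
positive, so it can decrease only for a finite time: from a value at most `1`, `v` dies out within
time `1 / (a * (1 - l1))`.
-/

open Set

section PowerDecay

variable {f f' : ℝ → ℝ} {s t c p : ℝ}

lemma image_pos_of_deriv_right_neg (hf : ContinuousOn f (Icc s t))
    (hf' : ∀ x ∈ Ico s t, HasDerivWithinAt f (f' x) (Ici x) x)
    (hneg : ∀ x ∈ Ico s t, 0 < f x → f' x < 0) (ht : 0 < f t) :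
    ∀ x ∈ Icc s t, 0 < f x := by
  intro x hx
  by_contra! hfx
  -- Since `f' < 0` wherever `f = f t / 2`, the graph of `f` cannot cross this level upwards.
  have hhalf : f t ≤ f t / 2 :=
    image_le_of_deriv_right_lt_deriv_boundary (hf.mono (Icc_subset_Icc_left hx.1))
      (fun y hy => hf' y ⟨hx.1.trans hy.1, hy.2⟩) (B := fun _ => f t / 2)
      (by linarith) (fun y => hasDerivAt_const y _)
      (fun y hy hfy => hneg y ⟨hx.1.trans hy.1, hy.2⟩ (by linarith)) (right_mem_Icc.2 hx.2)
  linarith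

lemma rpow_one_sub_div_le_of_deriv_right_le (hp : p ≠ 1) (hst : s ≤ t)
    (hf : ContinuousOn f (Icc s t))
    (hf' : ∀ x ∈ Ico s t, HasDerivWithinAt f (f' x) (Ici x) x)
    (hpos : ∀ x ∈ Icc s t, 0 < f x) (hle : ∀ x ∈ Ico s t, f' x ≤ -c * f x ^ p) :
    f t ^ (1 - p) / (1 - p) ≤ f s ^ (1 - p) / (1 - p) - c * (t - s) := by
  have hp' : 1 - p ≠ 0 := sub_ne_zero.2 hp.symm
  have hderiv : ∀ x ∈ Ico s t,
      HasDerivWithinAt (fun y => f y ^ (1 - p) / (1 - p)) (f' x * f x ^ (-p)) (Ici x) x := by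
    intro x hx
    have hne : f x ≠ 0 := (hpos x (Ico_subset_Icc_self hx)).ne'
    refine (((hf' x hx).rpow_const (Or.inl hne)).div_const (1 - p)).congr_deriv ?_
    rw [show 1 - p - 1 = -p by ring]
    field_simp
  have hrate : ∀ x ∈ Ico s t, f' x * f x ^ (-p) ≤ -c := by
    intro x hx
    have hfx : 0 < f x := hpos x (Ico_subset_Icc_self hx)
    calc f' x * f x ^ (-p) ≤ -c * f x ^ p * f x ^ (-p) := by gcongr; exact hle x hx
      _ = -c := by rw [mul_assoc, ← Real.rpow_add hfx, add_neg_cancel, Real.rpow_zero, mul_one]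
  refine image_le_of_deriv_right_le_deriv_boundary
    (B := fun x => f s ^ (1 - p) / (1 - p) - c * (x - s)) (B' := fun _ => -c)
    ((hf.rpow_const fun x hx => Or.inl (hpos x hx).ne').div_const _) hderiv (by simp)
    (by fun_prop) (fun x _ => ?_) hrate (right_mem_Icc.2 hst)
  simpa using ((((hasDerivAt_id x).sub_const s).const_mul c).const_sub _).hasDerivWithinAt

lemma rpow_one_sub_div_le_of_deriv_right_le_of_pos (hc : 0 < c) (hp : p ≠ 1) (hst : s ≤ t)
    (hf : ContinuousOn f (Icc s t))
    (hf' : ∀ x ∈ Ico s t, HasDerivWithinAt f (f' x) (Ici x) x)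
    (hle : ∀ x ∈ Ico s t, 0 < f x → f' x ≤ -c * f x ^ p) (ht : 0 < f t) :
    0 < f s ∧ f t ^ (1 - p) / (1 - p) ≤ f s ^ (1 - p) / (1 - p) - c * (t - s) := by
  have hneg : ∀ x ∈ Ico s t, 0 < f x → f' x < 0 := fun x hx hfx =>
    (hle x hx hfx).trans_lt (mul_neg_of_neg_of_pos (neg_neg_of_pos hc) (Real.rpow_pos_of_pos hfx p))
  have hpos := image_pos_of_deriv_right_neg hf hf' hneg ht
  exact ⟨hpos s (left_mem_Icc.2 hst), rpow_one_sub_div_le_of_deriv_right_le hp hst hf hf' hpos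
    fun x hx => hle x hx (hpos x (Ico_subset_Icc_self hx))⟩

lemma image_nonpos_of_deriv_right_le_rpow (hc : 0 < c) (hp : p < 1) (hst : s ≤ t)
    (hf : ContinuousOn f (Icc s t))
    (hf' : ∀ x ∈ Ico s t, HasDerivWithinAt f (f' x) (Ici x) x)
    (hle : ∀ x ∈ Ico s t, 0 < f x → f' x ≤ -c * f x ^ p)
    (hs : f s ≤ (c * (1 - p) * (t - s)) ^ (1 - p)⁻¹) : f t ≤ 0 := by
  by_contra! ht
  have hp' : 0 < 1 - p := sub_pos.2 hp
  obtain ⟨hs_pos, hdrop⟩ :=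
    rpow_one_sub_div_le_of_deriv_right_le_of_pos hc hp.ne hst hf hf' hle ht
  have hs' : f s ^ (1 - p) ≤ c * (1 - p) * (t - s) :=
    (Real.le_rpow_inv_iff_of_pos hs_pos.le
      (mul_nonneg (by positivity) (sub_nonneg.2 hst)) hp').1 hs
  have hdiv : f s ^ (1 - p) / (1 - p) ≤ c * (t - s) := by
    rw [div_le_iff₀ hp']
    linarith
  have ht' : 0 < f t ^ (1 - p) / (1 - p) := by positivity
  linarith

lemma image_le_rpow_of_deriv_right_le_rpow (hc : 0 < c) (hp : 1 < p) (hst : s < t)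
    (hf : ContinuousOn f (Icc s t))
    (hf' : ∀ x ∈ Ico s t, HasDerivWithinAt f (f' x) (Ici x) x)
    (hle : ∀ x ∈ Ico s t, 0 < f x → f' x ≤ -c * f x ^ p) :
    f t ≤ (c * (p - 1) * (t - s)) ^ (1 - p)⁻¹ := by
  have hK : 0 < c * (p - 1) * (t - s) :=
    mul_pos (mul_pos hc (sub_pos.2 hp)) (sub_pos.2 hst)
  rcases le_or_gt (f t) 0 with ht | ht
  · exact ht.trans (by positivity)
  have hp' : 1 - p < 0 := sub_neg.2 hp
  obtain ⟨hs_pos, hdrop⟩ :=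
    rpow_one_sub_div_le_of_deriv_right_le_of_pos hc hp.ne' hst.le hf hf' hle ht
  rw [Real.le_rpow_inv_iff_of_neg ht hK hp']
  have hs : f s ^ (1 - p) / (1 - p) < 0 := div_neg_of_pos_of_neg (by positivity) hp'
  have hdiv : f t ^ (1 - p) / (1 - p) ≤ -(c * (t - s)) := by linarith
  rw [div_le_iff_of_neg hp'] at hdiv
  linarith

end PowerDecay

theorem fixed_time_scalar_lyapunov_general {t0 a b l1 l2 : ℝ} (ha : 0 < a) (hb : 0 < b)
    (hl1 : l1 < 1) (hl2 : 1 < l2) {v v' : ℝ → ℝ} (hv : ContinuousOn v (Ici t0))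
    (hv' : ∀ t, t0 ≤ t → HasDerivWithinAt v (v' t) (Ici t) t)
    (hle : ∀ t, t0 ≤ t → 0 < v t → v' t ≤ -a * v t ^ l1 - b * v t ^ l2) :
    ∀ t, t0 + 1 / (a * (1 - l1)) + 1 / (b * (l2 - 1)) ≤ t → v t ≤ 0 := by
  intro t ht
  have hA : 0 < a * (1 - l1) := mul_pos ha (sub_pos.2 hl1)
  have hB : 0 < b * (l2 - 1) := mul_pos hb (sub_pos.2 hl2)
  set t1 := t0 + 1 / (b * (l2 - 1)) with ht1
  have h01 : t0 < t1 := lt_add_of_pos_right _ (one_div_pos.2 hB)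
  have h1t : 1 / (a * (1 - l1)) ≤ t - t1 := by linarith
  have hv1 : v t1 ≤ 1 := by
    have hbound := image_le_rpow_of_deriv_right_le_rpow hb hl2 h01 (hv.mono Icc_subset_Ici_self)
      (fun x hx => hv' x hx.1) fun x hx hvx =>
        (hle x hx.1 hvx).trans (by linarith [mul_pos ha (Real.rpow_pos_of_pos hvx l1)])
    rwa [ht1, add_sub_cancel_left, mul_one_div_cancel hB.ne', Real.one_rpow] at hbound
  refine image_nonpos_of_deriv_right_le_rpow ha hl1
    (sub_nonneg.1 ((one_div_pos.2 hA).le.trans h1t))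
    (hv.mono fun x hx => h01.le.trans hx.1) (fun x hx => hv' x (h01.le.trans hx.1))
    (fun x hx hvx => (hle x (h01.le.trans hx.1) hvx).trans
      (by linarith [mul_pos hb (Real.rpow_pos_of_pos hvx l2)])) (hv1.trans ?_)
  exact Real.one_le_rpow ((div_le_iff₀' hA).1 h1t) (inv_nonneg.2 (sub_nonneg.2 hl1.le))

/-- **Fixed-time stability, scalar Lyapunov form (Polyakov).**
If a nonnegative differentiable function `v` satisfies
`v'(t) ≤ -a·v(t)^l1 - b·v(t)^l2` for all `t ≥ t0`, with `a, b > 0` and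
`0 < l1 < 1 < l2`, then `v(t) = 0` for all
`t ≥ t0 + 1/(a(1-l1)) + 1/(b(l2-1))`, a bound independent of `v(t0)`. -/
theorem fixed_time_scalar_lyapunov
    (t0 a b l1 l2 : ℝ) (ha : 0 < a) (hb : 0 < b)
    (hl1 : 0 < l1) (hl1' : l1 < 1) (hl2 : 1 < l2)
    (v v' : ℝ → ℝ)
    (hv_nonneg : ∀ t, t0 ≤ t → 0 ≤ v t)
    (hv_deriv : ∀ t, t0 ≤ t → HasDerivAt v (v' t) t)
    (hv_ineq : ∀ t, t0 ≤ t → v' t ≤ -a * (v t) ^ l1 - b * (v t) ^ l2) :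
    ∀ t, t0 + 1 / (a * (1 - l1)) + 1 / (b * (l2 - 1)) ≤ t → v t = 0 := by
  intro t ht
  have ht0 : t0 ≤ t := by
    linarith [one_div_pos.2 (mul_pos ha (sub_pos.2 hl1')),
      one_div_pos.2 (mul_pos hb (sub_pos.2 hl2))]
  exact le_antisymm (fixed_time_scalar_lyapunov_general ha hb hl1' hl2
    (fun x hx => (hv_deriv x hx).continuousAt.continuousWithinAt)
    (fun x hx => (hv_deriv x hx).hasDerivWithinAt) (fun x hx _ => hv_ineq x hx) t ht)
    (hv_nonneg t ht0)
end

section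
/- Let H be a real n×n matrix all of whose eigenvalues (as a matrix over ℂ) have strictly positive real part. Then there exists a symmetric positive definite matrix P ∈ ℝ^{n×n} such that the matrix P·H + Hᵀ·P is positive definite. -/
open scoped Matrix

/-!
If the spectrum of `a` lies in the open right half-plane, a short enough Euler step `c = 1 - ε • a`
has spectrum in the open unit disc: `‖1 - ε * μ‖ < 1` amounts to `ε * ‖μ‖ ^ 2 < 2 * μ.re`, and
compactness of the spectrum makes `ε` uniform. By Gelfand's formula some power `c ^ N` is a strict
contraction, and for `p = ∑ k < N, star (c ^ k) * c ^ k` the difference `p - star c * p * c`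
telescopes to `1 - star (c ^ N) * c ^ N`, which is strictly positive. Up to the nonnegative term
`ε ^ 2 • (star a * p * a)` that difference is `ε • (p * a + star a * p)`, so `p` also solves the
Lyapunov inequality for `a`. This works in any complex C⋆-algebra; for a real matrix one applies it
to the complexification and takes the entrywise real part of `p`.
-/

lemma norm_one_sub_ofReal_mul_lt_one_iff {ε : ℝ} (hε : 0 < ε) (μ : ℂ) :
    ‖1 - ε * μ‖ < 1 ↔ ε * Complex.normSq μ < 2 * μ.re := by
  have expand : Complex.normSq (1 - ε * μ) = 1 - ε * (2 * μ.re - ε * Complex.normSq μ) := by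
    simp only [Complex.normSq_apply, Complex.sub_re, Complex.sub_im, Complex.one_re,
      Complex.one_im, Complex.re_ofReal_mul, Complex.im_ofReal_mul]
    ring
  rw [← sq_lt_one_iff₀ (norm_nonneg _), ← Complex.normSq_eq_norm_sq, expand, sub_lt_self_iff,
    mul_pos_iff_of_pos_left hε, sub_pos]

section BanachAlgebra

variable {A : Type*} [NormedRing A] [NormedAlgebra ℂ A] [CompleteSpace A] {a : A}

open Filter in
lemma eventually_norm_pow_lt_one_of_spectrum (ha : ∀ μ ∈ spectrum ℂ a, ‖μ‖ < 1) :
    ∀ᶠ N in atTop, ‖a ^ N‖ < 1 := by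
  cases subsingleton_or_nontrivial A
  · simp only [norm_of_subsingleton, zero_lt_one, eventually_true]
  have radius_lt_one : spectralRadius ℂ a < 1 := spectrum.spectralRadius_lt_of_forall_lt a ha
  have gelfand := spectrum.pow_nnnorm_pow_one_div_tendsto_nhds_spectralRadius a
  filter_upwards [gelfand.eventually_lt_const radius_lt_one, eventually_gt_atTop 0] with N hN hN_pos
  contrapose! hN
  exact ENNReal.one_le_rpow (by exact_mod_cast hN) (by positivity)

lemma exists_pos_forall_spectrum_one_sub_smul_norm_lt_one (ha : ∀ μ ∈ spectrum ℂ a, 0 < μ.re) :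
    ∃ ε : ℝ, 0 < ε ∧ ∀ μ ∈ spectrum ℂ (1 - ε • a), ‖μ‖ < 1 := by
  have normSq_pos : ∀ μ ∈ spectrum ℂ a, 0 < Complex.normSq μ := fun μ hμ ↦
    Complex.normSq_pos.mpr fun h ↦ (ha μ hμ).ne' (by rw [h, Complex.zero_re])
  have ratio_continuousOn :
      ContinuousOn (fun μ : ℂ ↦ μ.re / Complex.normSq μ) (spectrum ℂ a) :=
    Complex.continuous_re.continuousOn.div Complex.continuous_normSq.continuousOn
      fun μ hμ ↦ (normSq_pos μ hμ).ne'
  obtain ⟨ε, hε, ε_le_ratio⟩ := (spectrum.isCompact a).exists_forall_le' ratio_continuousOn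
    fun μ hμ ↦ div_pos (ha μ hμ) (normSq_pos μ hμ)
  refine ⟨ε, hε, fun μ hμ ↦ ?_⟩
  let u : ℂˣ := Units.mk0 ε (Complex.ofReal_ne_zero.mpr hε.ne')
  have euler_eq : 1 - ε • a = algebraMap ℂ A 1 - u • a := by
    rw [map_one, Units.smul_mk0, Complex.coe_smul]
  rw [euler_eq, ← spectrum.singleton_sub_eq, spectrum.unit_smul_eq_smul] at hμ
  obtain ⟨_, rfl, _, ⟨ν, hν, rfl⟩, rfl⟩ := hμ
  refine (norm_one_sub_ofReal_mul_lt_one_iff hε ν).mpr ?_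
  linarith [ha ν hν, (le_div_iff₀ (normSq_pos ν hν)).mp (ε_le_ratio ν hν)]

end BanachAlgebra

lemma sum_star_pow_mul_pow_sub_conj {A : Type*} [Ring A] [StarRing A] (c : A) (N : ℕ) :
    (∑ k ∈ Finset.range N, star (c ^ k) * c ^ k) -
        star c * (∑ k ∈ Finset.range N, star (c ^ k) * c ^ k) * c =
      1 - star (c ^ N) * c ^ N := by
  have shift (k : ℕ) :
      star c * (star (c ^ k) * c ^ k) * c = star (c ^ (k + 1)) * c ^ (k + 1) := by
    simp only [pow_succ, star_mul, mul_assoc]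
  simp only [Finset.mul_sum, Finset.sum_mul, shift, ← Finset.sum_sub_distrib]
  rw [Finset.sum_range_sub' (fun k ↦ star (c ^ k) * c ^ k), pow_zero, star_one, one_mul]

lemma smul_mul_add_star_mul_eq {R A : Type*} [CommRing R] [StarRing R] [TrivialStar R] [Ring A]
    [StarRing A] [Algebra R A] [StarModule R A] (r : R) (a p : A) :
    r • (p * a + star a * p) =
      (p - star (1 - r • a) * p * (1 - r • a)) + r ^ 2 • (star a * p * a) := by
  simp only [star_sub, star_one, star_smul, star_trivial, sub_mul, mul_sub, one_mul, mul_one,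
    smul_mul_assoc, mul_smul_comm]
  module

section CStarAlgebra

variable {A : Type*} [CStarAlgebra A] [PartialOrder A] [StarOrderedRing A] {a : A}

lemma isStrictlyPositive_one_sub_star_mul_self (ha : ‖a‖ < 1) :
    IsStrictlyPositive (1 - star a * a) := by
  have norm_sq_lt_one : ‖a‖ ^ 2 < 1 := pow_lt_one₀ (norm_nonneg a) ha two_ne_zero
  have : algebraMap ℝ A (1 - ‖a‖ ^ 2) ≤ 1 - star a * a := by
    rw [map_sub, map_one]
    exact sub_le_sub_left CStarAlgebra.star_mul_le_algebraMap_norm_sq 1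
  exact (isStrictlyPositive_algebraMap (sub_pos.mpr norm_sq_lt_one)).of_le this

lemma exists_nonneg_isStrictlyPositive_sub_star_mul_mul
    (ha : ∀ μ ∈ spectrum ℂ a, ‖μ‖ < 1) :
    ∃ p : A, 0 ≤ p ∧ IsStrictlyPositive (p - star a * p * a) := by
  obtain ⟨N, hN⟩ := (eventually_norm_pow_lt_one_of_spectrum ha).exists
  refine ⟨∑ k ∈ Finset.range N, star (a ^ k) * a ^ k,
    Finset.sum_nonneg fun k _ ↦ star_mul_self_nonneg (a ^ k), ?_⟩
  rw [sum_star_pow_mul_pow_sub_conj]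
  exact isStrictlyPositive_one_sub_star_mul_self hN

theorem exists_isStrictlyPositive_mul_add_star_mul (ha : ∀ μ ∈ spectrum ℂ a, 0 < μ.re) :
    ∃ p : A, IsStrictlyPositive p ∧ IsStrictlyPositive (p * a + star a * p) := by
  obtain ⟨ε, hε, hc⟩ := exists_pos_forall_spectrum_one_sub_smul_norm_lt_one ha
  obtain ⟨p, hp, hstein⟩ := exists_nonneg_isStrictlyPositive_sub_star_mul_mul hc
  refine ⟨p, ?_, ?_⟩
  · simpa only [sub_add_cancel] using hstein.add_nonneg (star_left_conjugate_nonneg hp (1 - ε • a))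
  · have smul_pos : IsStrictlyPositive (ε • (p * a + star a * p)) := by
      rw [smul_mul_add_star_mul_eq]
      exact hstein.add_nonneg (smul_nonneg (sq_nonneg ε) (star_left_conjugate_nonneg hp a))
    simpa only [inv_smul_smul₀ hε.ne'] using smul_pos.smul (inv_pos.mpr hε)

end CStarAlgebra

section RealPart

open scoped ComplexOrder

variable {𝕜 l m n : Type*} [RCLike 𝕜]

lemma map_re_mul_map_ofReal [Fintype m] (A : Matrix l m 𝕜) (B : Matrix m n ℝ) :
    (A * B.map (RCLike.ofReal (K := 𝕜))).map RCLike.re = A.map RCLike.re * B := by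
  ext i j
  simp only [Matrix.map_apply, Matrix.mul_apply, map_sum, RCLike.re_mul_ofReal]

lemma map_ofReal_mul_map_re [Fintype m] (A : Matrix l m ℝ) (B : Matrix m n 𝕜) :
    (A.map (RCLike.ofReal (K := 𝕜)) * B).map RCLike.re = A * B.map RCLike.re := by
  ext i j
  simp only [Matrix.map_apply, Matrix.mul_apply, map_sum, RCLike.re_ofReal_mul]

lemma posDef_map_re {P : Matrix n n 𝕜} (hP : P.PosDef) : (P.map RCLike.re).PosDef := by
  refine ⟨hP.isHermitian.map RCLike.re fun x ↦ RCLike.conj_re x, fun x hx ↦ ?_⟩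
  let z : n →₀ 𝕜 := x.mapRange RCLike.ofReal RCLike.ofReal_zero
  have support_eq : z.support = x.support :=
    Finsupp.support_mapRange_of_injective RCLike.ofReal_zero x RCLike.ofReal_injective
  have z_ne_zero : z ≠ 0 := by
    rwa [← Finsupp.support_nonempty_iff, support_eq, Finsupp.support_nonempty_iff]
  have form_pos := (RCLike.pos_iff.mp (hP.2 z_ne_zero)).1
  simpa [Finsupp.sum, support_eq, z] using form_pos

open scoped Matrix.Norms.L2Operator MatrixOrder in
theorem lyapunov_exists_of_antiHurwitz_general [Fintype n] [DecidableEq n] (H : Matrix n n ℝ)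
    (hH : ∀ μ ∈ spectrum ℂ (H.map (fun x : ℝ => (x : ℂ))), 0 < μ.re) :
    ∃ P : Matrix n n ℝ, P.PosDef ∧ (P * H + Hᵀ * P).PosDef := by
  obtain ⟨P, hP, hL⟩ :=
    exists_isStrictlyPositive_mul_add_star_mul (a := H.map (RCLike.ofReal (K := ℂ))) hH
  rw [Matrix.isStrictlyPositive_iff_posDef] at hP hL
  have star_eq : star (H.map (RCLike.ofReal (K := ℂ))) = Hᵀ.map RCLike.ofReal := by
    rw [Matrix.star_eq_conjTranspose,
      ← Matrix.conjTranspose_map _ fun x ↦ (RCLike.conj_ofReal x).symm,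
      Matrix.conjTranspose_eq_transpose_of_trivial]
  have re_eq := posDef_map_re hL
  rw [Matrix.map_add _ (map_add _), star_eq, map_ofReal_mul_map_re, map_re_mul_map_ofReal] at re_eq
  exact ⟨P.map RCLike.re, posDef_map_re hP, re_eq⟩

end RealPart

/-- **Lyapunov matrix existence for anti-Hurwitz matrices.**
If every eigenvalue of the real matrix `H` (viewed as a complex matrix) has strictly
positive real part, then there exists a symmetric positive definite `P` with
`P·H + Hᵀ·P` positive definite. -/
theorem lyapunov_exists_of_antiHurwitz (n : ℕ) (H : Matrix (Fin n) (Fin n) ℝ)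
    (hH : ∀ μ ∈ spectrum ℂ (H.map (fun x : ℝ => (x : ℂ))), 0 < μ.re) :
    ∃ P : Matrix (Fin n) (Fin n) ℝ, P.PosDef ∧ (P * H + Hᵀ * P).PosDef :=
  lyapunov_exists_of_antiHurwitz_general H hH
end

section
/- Let k > 0, γ > 0, T > 0, let A : ℝ → ℝ^{m×m} be continuous with A(s) symmetric positive semidefinite for every s ≥ 0, and define M(t) = ∫_0^t e^{k(s−t)} A(s) ds. Suppose the interval-excitation condition ∫_0^T A(s) ds ⪰ γ·I_m holds (i.e., ∫_0^T A(s) ds − γ I_m is positive semidefinite). Then for every t ≥ T, M(t) ⪰ γ·e^{−kt}·I_m; in particular, for every q ≥ 1 and every t ∈ [T, qT], the smallest eigenvalue of M(t) satisfies λ_min(M(t)) ≥ γ·e^{−kqT} > 0. -/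
open scoped Matrix

/-!
Integrals of positive semidefinite matrices are positive semidefinite, hence integration is monotone
for the Loewner order. On `[0, T]` the weight `e^{k(s-t)}` is at least `e^{-kt}`, and on `[T, t]`
the integrand is still positive semidefinite, so `M(t) ⪰ e^{-kt} ∫₀ᵀ A ⪰ γ e^{-kt} I`.
-/

open MeasureTheory Set

section EntrywiseIntegral

variable {X m n 𝕜 : Type*} [MeasurableSpace X] {μ : Measure X} [RCLike 𝕜]

/-- The integral of a matrix-valued function, taken entry by entry so that no norm on the space of
matrices has to be chosen; entries that are not integrable contribute `0`. -/
noncomputable def entrywiseIntegral (μ : Measure X) (A : X → Matrix m n 𝕜) : Matrix m n 𝕜 :=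
  Matrix.of fun i j ↦ ∫ x, A x i j ∂μ

lemma entrywiseIntegral_apply (A : X → Matrix m n 𝕜) (i : m) (j : n) :
    entrywiseIntegral μ A i j = ∫ x, A x i j ∂μ :=
  rfl

lemma sum_star_mul_entrywiseIntegral_mul {A : X → Matrix n n 𝕜}
    (hA : ∀ i j, Integrable (fun x ↦ A x i j) μ) (v : n →₀ 𝕜) :
    v.sum (fun i vi ↦ v.sum fun j vj ↦ star vi * entrywiseIntegral μ A i j * vj) =
      ∫ x, v.sum (fun i vi ↦ v.sum fun j vj ↦ star vi * A x i j * vj) ∂μ := by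
  have hterm : ∀ i j, Integrable (fun x ↦ star (v i) * A x i j * v j) μ := fun i j ↦
    ((hA i j).const_mul (star (v i))).mul_const (v j)
  simp only [Finsupp.sum, entrywiseIntegral_apply]
  rw [integral_finsetSum _ fun i _ ↦ integrable_finsetSum _ fun j _ ↦ hterm i j]
  refine Finset.sum_congr rfl fun i _ ↦ ?_
  rw [integral_finsetSum _ fun j _ ↦ hterm i j]
  simp only [integral_const_mul, integral_mul_const]

lemma entrywiseIntegral_conjTranspose (A : X → Matrix m n 𝕜) :
    entrywiseIntegral μ (fun x ↦ (A x)ᴴ) = (entrywiseIntegral μ A)ᴴ := by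
  ext i j
  exact integral_conj

lemma eq_entrywiseIntegral_of_intervalIntegral {a b : ℝ} (hab : a ≤ b) {A : ℝ → Matrix m n 𝕜}
    {B : Matrix m n 𝕜} (hB : ∀ i j, B i j = ∫ s in a..b, A s i j) :
    B = entrywiseIntegral (volume.restrict (Ioc a b)) A := by
  ext i j
  rw [hB, intervalIntegral.integral_of_le hab, entrywiseIntegral_apply]

lemma entrywiseIntegral_smul (c : ℝ) (A : X → Matrix m n 𝕜) :
    entrywiseIntegral μ (fun x ↦ c • A x) = c • entrywiseIntegral μ A := by
  ext i j
  exact integral_smul c _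

end EntrywiseIntegral

section Loewner

open scoped MatrixOrder ComplexOrder

variable {X n 𝕜 : Type*} [MeasurableSpace X] {μ : Measure X} [RCLike 𝕜]

lemma posSemidef_entrywiseIntegral {A : X → Matrix n n 𝕜}
    (hAi : ∀ i j, Integrable (fun x ↦ A x i j) μ) (hA : ∀ᵐ x ∂μ, (A x).PosSemidef) :
    (entrywiseIntegral μ A).PosSemidef := by
  refine ⟨?_, fun v ↦ ?_⟩
  · rw [Matrix.IsHermitian, ← entrywiseIntegral_conjTranspose]
    ext i j
    refine integral_congr_ae ?_
    filter_upwards [hA] with x hx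
    rw [hx.isHermitian.eq]
  · rw [sum_star_mul_entrywiseIntegral_mul hAi]
    refine integral_nonneg_of_ae ?_
    filter_upwards [hA] with x hx
    exact hx.2 v

lemma entrywiseIntegral_mono {A B : X → Matrix n n 𝕜}
    (hAi : ∀ i j, Integrable (fun x ↦ A x i j) μ) (hBi : ∀ i j, Integrable (fun x ↦ B x i j) μ)
    (hAB : ∀ᵐ x ∂μ, A x ≤ B x) : entrywiseIntegral μ A ≤ entrywiseIntegral μ B := by
  have hsub : entrywiseIntegral μ B - entrywiseIntegral μ A =
      entrywiseIntegral μ (fun x ↦ B x - A x) := by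
    ext i j
    exact (integral_sub (hBi i j) (hAi i j)).symm
  rw [Matrix.le_iff, hsub]
  exact posSemidef_entrywiseIntegral (fun i j ↦ (hBi i j).sub (hAi i j)) hAB

lemma entrywiseIntegral_mono_set {s u : Set X} (hs : MeasurableSet s) (hu : MeasurableSet u)
    (hsu : s ⊆ u) {A : X → Matrix n n 𝕜} (hAi : ∀ i j, IntegrableOn (fun x ↦ A x i j) u μ)
    (hA : ∀ x ∈ u, (A x).PosSemidef) :
    entrywiseIntegral (μ.restrict s) A ≤ entrywiseIntegral (μ.restrict u) A := by
  have hdiff : entrywiseIntegral (μ.restrict u) A - entrywiseIntegral (μ.restrict s) A =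
      entrywiseIntegral (μ.restrict (u \ s)) A := by
    ext i j
    exact (setIntegral_sdiff hs (hAi i j) hsu).symm
  rw [Matrix.le_iff, hdiff]
  exact posSemidef_entrywiseIntegral (fun i j ↦ (hAi i j).mono_set sdiff_subset)
    (ae_restrict_of_forall_mem (hu.diff hs) fun x hx ↦ hA x hx.1)

lemma smul_entrywiseIntegral_le_entrywiseIntegral_smul {s u : Set X}
    (hs : MeasurableSet s) (hu : MeasurableSet u) (hsu : s ⊆ u)
    {A : X → Matrix n n 𝕜} {w : X → ℝ} {c : ℝ}
    (hAi : ∀ i j, IntegrableOn (fun x ↦ A x i j) s μ)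
    (hwAi : ∀ i j, IntegrableOn (fun x ↦ w x • A x i j) u μ)
    (hA : ∀ x ∈ u, (A x).PosSemidef) (hw : ∀ x ∈ u, 0 ≤ w x) (hcw : ∀ x ∈ s, c ≤ w x) :
    c • entrywiseIntegral (μ.restrict s) A ≤
      entrywiseIntegral (μ.restrict u) (fun x ↦ w x • A x) :=
  calc
    c • entrywiseIntegral (μ.restrict s) A
        = entrywiseIntegral (μ.restrict s) (fun x ↦ c • A x) :=
      (entrywiseIntegral_smul c A).symm
    _ ≤ entrywiseIntegral (μ.restrict s) (fun x ↦ w x • A x) :=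
      entrywiseIntegral_mono (fun i j ↦ (hAi i j).smul c) (fun i j ↦ (hwAi i j).mono_set hsu)
        (ae_restrict_of_forall_mem hs fun x hx ↦ by
          rw [Matrix.le_iff, ← sub_smul]
          exact (hA x (hsu hx)).smul (sub_nonneg.2 (hcw x hx)))
    _ ≤ entrywiseIntegral (μ.restrict u) (fun x ↦ w x • A x) :=
      entrywiseIntegral_mono_set hs hu hsu hwAi fun x hx ↦ (hA x hx).smul (hw x hx)

lemma exp_smul_entrywiseIntegral_Ioc_le {k a b t : ℝ} (hk : 0 ≤ k) (hbt : b ≤ t)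
    {A : ℝ → Matrix n n 𝕜} (hAi : ∀ i j, IntervalIntegrable (fun s ↦ A s i j) volume a t)
    (hA : ∀ s ∈ Ioc a t, (A s).PosSemidef) :
    Real.exp (k * (a - t)) • entrywiseIntegral (volume.restrict (Ioc a b)) A ≤
      entrywiseIntegral (volume.restrict (Ioc a t)) (fun s ↦ Real.exp (k * (s - t)) • A s) := by
  have hsub : Ioc a b ⊆ Ioc a t := Ioc_subset_Ioc_right hbt
  refine smul_entrywiseIntegral_le_entrywiseIntegral_smul measurableSet_Ioc
    measurableSet_Ioc hsub (fun i j ↦ (hAi i j).1.mono_set hsub) (fun i j ↦ ?_) hA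
    (fun s _ ↦ (Real.exp_pos _).le) fun s hs ↦ ?_
  · exact ((hAi i j).continuousOn_smul (by fun_prop)).1
  · have has : a ≤ s := hs.1.le
    gcongr

lemma le_eigenvalues_of_posSemidef_sub_smul_one [Fintype n] [DecidableEq n]
    {B : Matrix n n 𝕜} {c : ℝ} (hB : B.IsHermitian)
    (hc : (B - c • (1 : Matrix n n 𝕜)).PosSemidef) (i : n) :
    c ≤ hB.eigenvalues i := by
  have hle : algebraMap ℝ (Matrix n n 𝕜) c ≤ B := by
    rwa [Algebra.algebraMap_eq_smul_one, Matrix.le_iff]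
  exact (algebraMap_le_iff_le_spectrum (p := IsSelfAdjoint) hB).1 hle _
    (hB.eigenvalues_mem_spectrum_real i)

theorem interval_excitation_lower_bound_general [Fintype n] [DecidableEq n] {k γ T : ℝ}
    (hk : 0 ≤ k) (hγ : 0 < γ) (hT : 0 ≤ T) {A : ℝ → Matrix n n 𝕜}
    (hAi : ∀ t, T ≤ t → ∀ i j, IntervalIntegrable (fun s ↦ A s i j) volume 0 t)
    (hA : ∀ s, 0 ≤ s → (A s).PosSemidef) {M : ℝ → Matrix n n 𝕜}
    (hM : ∀ t i j, M t i j = ∫ s in (0 : ℝ)..t, Real.exp (k * (s - t)) • A s i j)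
    {IA : Matrix n n 𝕜} (hIA : ∀ i j, IA i j = ∫ s in (0 : ℝ)..T, A s i j)
    (hIE : (IA - γ • (1 : Matrix n n 𝕜)).PosSemidef) :
    (∀ t, T ≤ t → (M t - (γ * Real.exp (-k * t)) • (1 : Matrix n n 𝕜)).PosSemidef) ∧
    (∀ q : ℝ, ∀ t ∈ Icc T (q * T),
      (∀ (hHerm : (M t).IsHermitian) (i : n),
        γ * Real.exp (-(k * q * T)) ≤ hHerm.eigenvalues i) ∧
      0 < γ * Real.exp (-(k * q * T))) := by
  have hbound : ∀ t, T ≤ t →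
      (M t - (γ * Real.exp (-k * t)) • (1 : Matrix n n 𝕜)).PosSemidef := fun t ht ↦
    calc
      (γ * Real.exp (-k * t)) • (1 : Matrix n n 𝕜)
          = Real.exp (k * (0 - t)) • γ • (1 : Matrix n n 𝕜) := by
        rw [smul_smul, mul_comm γ, zero_sub, mul_neg, neg_mul]
      _ ≤ Real.exp (k * (0 - t)) • IA :=
        smul_le_smul_of_nonneg_left (Matrix.le_iff.2 hIE) (Real.exp_pos _).le
      _ ≤ M t := by
        rw [eq_entrywiseIntegral_of_intervalIntegral hT hIA,
          eq_entrywiseIntegral_of_intervalIntegral (hT.trans ht) (hM t)]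
        exact exp_smul_entrywiseIntegral_Ioc_le hk ht (hAi t ht) fun s hs ↦ hA s hs.1.le
  refine ⟨hbound, fun q t ⟨hTt, htq⟩ ↦ ⟨fun hHerm i ↦ ?_, by positivity⟩⟩
  have hexp : γ * Real.exp (-(k * q * T)) ≤ γ * Real.exp (-k * t) := by
    rw [neg_mul, mul_assoc]
    gcongr
  exact hexp.trans (le_eigenvalues_of_posSemidef_sub_smul_one hHerm (hbound t hTt) i)

end Loewner

/-- **Interval excitation gives a positive lower bound on the filtered information matrix.**
Let `A(s) ⪰ 0` be continuous, `M(t) = ∫₀ᵗ e^{k(s−t)} A(s) ds` (entrywise), and suppose the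
interval-excitation condition `∫₀ᵀ A(s) ds ⪰ γ·I` holds. Then `M(t) ⪰ γ e^{−kt} I` for all
`t ≥ T`; in particular, for every `q ≥ 1` and `t ∈ [T, qT]`, every eigenvalue of the
(Hermitian) matrix `M(t)` is at least `γ e^{−kqT} > 0`. -/
theorem interval_excitation_lower_bound (m : ℕ) (k γ T : ℝ)
    (hk : 0 < k) (hγ : 0 < γ) (hT : 0 < T)
    (A : ℝ → Matrix (Fin m) (Fin m) ℝ) (hAc : Continuous A)
    (hA : ∀ s : ℝ, 0 ≤ s → (A s).PosSemidef)
    (M : ℝ → Matrix (Fin m) (Fin m) ℝ)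
    (hM : ∀ (t : ℝ) (i j : Fin m),
      M t i j = ∫ s in (0:ℝ)..t, Real.exp (k * (s - t)) * A s i j)
    (IA : Matrix (Fin m) (Fin m) ℝ)
    (hIA : ∀ i j, IA i j = ∫ s in (0:ℝ)..T, A s i j)
    (hIE : (IA - γ • (1 : Matrix (Fin m) (Fin m) ℝ)).PosSemidef) :
    (∀ t : ℝ, T ≤ t →
      (M t - (γ * Real.exp (-k * t)) • (1 : Matrix (Fin m) (Fin m) ℝ)).PosSemidef) ∧
    (∀ q : ℝ, 1 ≤ q → ∀ t ∈ Set.Icc T (q * T),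
      (∀ (hHerm : (M t).IsHermitian) (i : Fin m),
        γ * Real.exp (-(k * q * T)) ≤ hHerm.eigenvalues i) ∧
      0 < γ * Real.exp (-(k * q * T))) := by
  obtain ⟨hbound, heig⟩ := interval_excitation_lower_bound_general hk.le hγ hT.le
    (fun t _ i j ↦ (hAc.matrix_elem i j).intervalIntegrable 0 t) hA hM hIA hIE
  exact ⟨hbound, fun q _ ↦ heig q⟩
end

section
/- Let m ≥ 1, μ > 0, α ∈ (0,1), let M ∈ ℝ^{m×m} be symmetric with M ⪰ μ·I_m (i.e., M − μI_m positive semidefinite), and let θ ∈ ℝ^m. Then θᵀ Mᵀ ⌈Mθ⌋^{1−α} = Σ_{i=1}^m |(Mθ)_i|^{2−α} ≥ μ^{2−α}·‖θ‖₂^{2−α}, and θᵀ Mᵀ ⌈Mθ⌋^{1+α} = Σ_{i=1}^m |(Mθ)_i|^{2+α} ≥ m^{−α/2}·μ^{2+α}·‖θ‖₂^{2+α}, where ‖·‖₂ is the Euclidean norm. -/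
/-!
With `y = Mθ`, the pairing is `Σ y_i ⌈y_i⌋^β = Σ |y_i|^(β+1)`. The Cauchy–Schwarz inequality turns
`μ‖θ‖₂² ≤ ⟨θ, y⟩` into `μ‖θ‖₂ ≤ ‖y‖₂`, so only a comparison of `‖y‖₂^p` with `Σ |y_i|^p` remains.
Since `‖y‖₂^p = (Σ y_i²)^(p/2)`, it is subadditivity of `t ↦ t^(p/2)` for `p ≤ 2` and the power mean
inequality for `p ≥ 2`.
-/

open scoped Matrix
open Finset

/-- The componentwise signed power `⌈v⌋^β`, with `i`-th component `|v_i|^β · sgn(v_i)`. -/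
noncomputable def signedPow {d : ℕ} (β : ℝ) (v : Fin d → ℝ) : Fin d → ℝ :=
  fun i => |v i| ^ β * Real.sign (v i)

theorem mul_real_sign_self (x : ℝ) : x * Real.sign x = |x| := by
  rcases lt_trichotomy x 0 with hneg | rfl | hpos
  · rw [Real.sign_of_neg hneg, abs_of_neg hneg, mul_neg_one]
  · simp
  · rw [Real.sign_of_pos hpos, abs_of_pos hpos, mul_one]

theorem dotProduct_signedPow {d : ℕ} {β : ℝ} (hβ : β + 1 ≠ 0) (v : Fin d → ℝ) :
    v ⬝ᵥ signedPow β v = ∑ i, |v i| ^ (β + 1) := by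
  refine sum_congr rfl fun i _ => ?_
  calc v i * (|v i| ^ β * Real.sign (v i))
      = |v i| ^ β * (v i * Real.sign (v i)) := mul_left_comm _ _ _
    _ = |v i| ^ (β + 1) := by
      rw [mul_real_sign_self, Real.rpow_add_one' (abs_nonneg _) hβ]

theorem dotProduct_transpose_mulVec_signedPow {m n : ℕ} {β : ℝ} (hβ : β + 1 ≠ 0)
    (M : Matrix (Fin m) (Fin n) ℝ) (θ : Fin n → ℝ) :
    θ ⬝ᵥ (Mᵀ *ᵥ signedPow β (M *ᵥ θ)) = ∑ i, |(M *ᵥ θ) i| ^ (β + 1) := by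
  rw [Matrix.dotProduct_mulVec, Matrix.vecMul_transpose, dotProduct_signedPow hβ]

section PowerSums

variable {ι : Type*}

theorem rpow_sum_le_sum_rpow_of_le_one {p : ℝ} (hp₀ : 0 < p) (hp₁ : p ≤ 1) {s : Finset ι}
    {f : ι → ℝ} (hf : ∀ i ∈ s, 0 ≤ f i) : (∑ i ∈ s, f i) ^ p ≤ ∑ i ∈ s, f i ^ p :=
  le_sum_of_subadditive_on_pred (· ^ p) (0 ≤ ·) (Real.zero_rpow hp₀.ne').le
    (fun _ _ ha hb => Real.rpow_add_le_add_rpow ha hb hp₀.le hp₁) (fun _ _ => add_nonneg) f hf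

theorem abs_rpow_eq_sq_rpow (x p : ℝ) : |x| ^ p = (x ^ 2) ^ (p / 2) := by
  rw [Real.rpow_div_two_eq_sqrt _ (sq_nonneg x), Real.sqrt_sq_eq_abs]

variable [Fintype ι]

theorem sqrt_sum_sq_rpow (p : ℝ) (x : ι → ℝ) :
    √(∑ i, x i ^ 2) ^ p = (∑ i, x i ^ 2) ^ (p / 2) :=
  (Real.rpow_div_two_eq_sqrt p (sum_nonneg fun _ _ => sq_nonneg _)).symm

theorem sqrt_sum_sq_rpow_le_sum_abs_rpow {p : ℝ} (hp₀ : 0 < p) (hp₂ : p ≤ 2) (x : ι → ℝ) :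
    √(∑ i, x i ^ 2) ^ p ≤ ∑ i, |x i| ^ p := by
  simp only [sqrt_sum_sq_rpow, abs_rpow_eq_sq_rpow]
  exact rpow_sum_le_sum_rpow_of_le_one (by linarith) (by linarith) fun _ _ => sq_nonneg _

theorem card_rpow_mul_sqrt_sum_sq_rpow_le_sum_abs_rpow {p : ℝ} (hp : 2 ≤ p) (x : ι → ℝ) :
    (Fintype.card ι : ℝ) ^ (1 - p / 2) * √(∑ i, x i ^ 2) ^ p ≤ ∑ i, |x i| ^ p := by
  have power_mean : √(∑ i, x i ^ 2) ^ p ≤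
      (Fintype.card ι : ℝ) ^ (p / 2 - 1) * ∑ i, |x i| ^ p := by
    simp only [sqrt_sum_sq_rpow, abs_rpow_eq_sq_rpow]
    exact Real.rpow_sum_le_const_mul_sum_rpow_of_nonneg univ (by linarith) fun _ _ => sq_nonneg _
  rw [← neg_sub, Real.rpow_neg (Nat.cast_nonneg _)]
  exact inv_mul_le_of_le_mul₀ (by positivity) (by positivity) power_mean

end PowerSums

theorem mul_norm_le_norm_of_mul_norm_sq_le_inner {E : Type*} [NormedAddCommGroup E]
    [InnerProductSpace ℝ E] {c : ℝ} {x y : E} (h : c * ‖x‖ ^ 2 ≤ inner ℝ x y) :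
    c * ‖x‖ ≤ ‖y‖ := by
  rcases (norm_nonneg x).eq_or_lt with hx | hx
  · simp [← hx]
  · refine le_of_mul_le_mul_left ?_ hx
    calc ‖x‖ * (c * ‖x‖) = c * ‖x‖ ^ 2 := by ring
      _ ≤ inner ℝ x y := h
      _ ≤ ‖x‖ * ‖y‖ := real_inner_le_norm x y

theorem mul_sqrt_sum_sq_le_of_mul_sum_sq_le_dotProduct {ι : Type*} [Fintype ι] {c : ℝ}
    {x y : ι → ℝ} (h : c * ∑ i, x i ^ 2 ≤ x ⬝ᵥ y) : c * √(∑ i, x i ^ 2) ≤ √(∑ i, y i ^ 2) := by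
  have hinner : c * ‖WithLp.toLp 2 x‖ ^ 2 ≤ inner ℝ (WithLp.toLp 2 x) (WithLp.toLp 2 y) := by
    rwa [EuclideanSpace.real_norm_sq_eq, EuclideanSpace.inner_toLp_toLp, star_trivial,
      dotProduct_comm]
  simpa only [EuclideanSpace.norm_eq, Real.norm_eq_abs, sq_abs] using
    mul_norm_le_norm_of_mul_norm_sq_le_inner hinner

theorem mul_sum_sq_le_dotProduct_mulVec {ι : Type*} [Fintype ι] [DecidableEq ι] {c : ℝ}
    {M : Matrix ι ι ℝ} (hM : (M - c • (1 : Matrix ι ι ℝ)).PosSemidef) (x : ι → ℝ) :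
    c * ∑ i, x i ^ 2 ≤ x ⬝ᵥ (M *ᵥ x) := by
  have h := hM.dotProduct_mulVec_nonneg x
  rw [star_trivial, Matrix.sub_mulVec, Matrix.smul_mulVec, Matrix.one_mulVec, dotProduct_sub,
    dotProduct_smul, smul_eq_mul, sub_nonneg] at h
  simpa only [dotProduct, sq] using h

theorem signed_power_coercivity_general {m n : ℕ} {μ α : ℝ} (hμ : 0 ≤ μ) (hα : 0 ≤ α)
    (M : Matrix (Fin m) (Fin n) ℝ) (θ : Fin n → ℝ)
    (hM : μ * √(∑ i, θ i ^ 2) ≤ √(∑ i, (M *ᵥ θ) i ^ 2)) :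
    (α ≤ 1 →
      θ ⬝ᵥ (Mᵀ *ᵥ signedPow (1 - α) (M *ᵥ θ)) = ∑ i, |(M *ᵥ θ) i| ^ (2 - α) ∧
      μ ^ (2 - α) * √(∑ i, θ i ^ 2) ^ (2 - α) ≤ ∑ i, |(M *ᵥ θ) i| ^ (2 - α)) ∧
    (θ ⬝ᵥ (Mᵀ *ᵥ signedPow (1 + α) (M *ᵥ θ)) = ∑ i, |(M *ᵥ θ) i| ^ (2 + α) ∧
      (m : ℝ) ^ (-α / 2) * μ ^ (2 + α) * √(∑ i, θ i ^ 2) ^ (2 + α)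
        ≤ ∑ i, |(M *ᵥ θ) i| ^ (2 + α)) := by
  have pairing {β p : ℝ} (hp : 0 < p) (hβ : β + 1 = p) :
      θ ⬝ᵥ (Mᵀ *ᵥ signedPow β (M *ᵥ θ)) = ∑ i, |(M *ᵥ θ) i| ^ p := by
    subst hβ
    exact dotProduct_transpose_mulVec_signedPow hp.ne' M θ
  have norm_bound {p : ℝ} (hp : 0 ≤ p) :
      μ ^ p * √(∑ i, θ i ^ 2) ^ p ≤ √(∑ i, (M *ᵥ θ) i ^ 2) ^ p := by
    rw [← Real.mul_rpow hμ (Real.sqrt_nonneg _)]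
    exact Real.rpow_le_rpow (by positivity) hM hp
  refine ⟨fun hα₁ => ⟨pairing (by linarith) (by ring), ?_⟩, pairing (by linarith) (by ring), ?_⟩
  · exact (norm_bound (by linarith)).trans
      (sqrt_sum_sq_rpow_le_sum_abs_rpow (by linarith) (by linarith) _)
  · calc (m : ℝ) ^ (-α / 2) * μ ^ (2 + α) * √(∑ i, θ i ^ 2) ^ (2 + α)
        = (m : ℝ) ^ (1 - (2 + α) / 2) * (μ ^ (2 + α) * √(∑ i, θ i ^ 2) ^ (2 + α)) := by
          rw [mul_assoc]
          ring_nf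
      _ ≤ (m : ℝ) ^ (1 - (2 + α) / 2) * √(∑ i, (M *ᵥ θ) i ^ 2) ^ (2 + α) := by
          gcongr
          exact norm_bound (by linarith)
      _ ≤ ∑ i, |(M *ᵥ θ) i| ^ (2 + α) := by
          simpa only [Fintype.card_fin] using
            card_rpow_mul_sqrt_sum_sq_rpow_le_sum_abs_rpow (le_add_of_nonneg_right hα) (M *ᵥ θ)

/-- **Coercivity of the signed-power pairing.**
If `M` is symmetric with `M ⪰ μI`, `μ > 0`, `α ∈ (0,1)`, then
`θᵀMᵀ⌈Mθ⌋^{1−α} = Σ_i |(Mθ)_i|^{2−α} ≥ μ^{2−α}‖θ‖₂^{2−α}` and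
`θᵀMᵀ⌈Mθ⌋^{1+α} = Σ_i |(Mθ)_i|^{2+α} ≥ m^{−α/2} μ^{2+α}‖θ‖₂^{2+α}`. -/
theorem signed_power_coercivity (m : ℕ) (hm : 1 ≤ m) (μ α : ℝ)
    (hμ : 0 < μ) (hα : α ∈ Set.Ioo (0:ℝ) 1)
    (M : Matrix (Fin m) (Fin m) ℝ) (hMsym : M.IsSymm)
    (hM : (M - μ • (1 : Matrix (Fin m) (Fin m) ℝ)).PosSemidef)
    (θ : Fin m → ℝ) :
    (θ ⬝ᵥ (Mᵀ *ᵥ signedPow (1 - α) (M *ᵥ θ)) = ∑ i, |(M *ᵥ θ) i| ^ (2 - α) ∧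
      μ ^ (2 - α) * Real.sqrt (∑ i, θ i ^ 2) ^ (2 - α) ≤ ∑ i, |(M *ᵥ θ) i| ^ (2 - α)) ∧
    (θ ⬝ᵥ (Mᵀ *ᵥ signedPow (1 + α) (M *ᵥ θ)) = ∑ i, |(M *ᵥ θ) i| ^ (2 + α) ∧
      (m : ℝ) ^ (-α / 2) * μ ^ (2 + α) * Real.sqrt (∑ i, θ i ^ 2) ^ (2 + α)
        ≤ ∑ i, |(M *ᵥ θ) i| ^ (2 + α)) :=
  have h := signed_power_coercivity_general hμ.le hα.1.le M θ
    (mul_sqrt_sum_sq_le_of_mul_sum_sq_le_dotProduct (mul_sum_sq_le_dotProduct_mulVec hM θ))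
  ⟨h.1 hα.2.le, h.2⟩
end
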